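/- Let N ≥ 1, let L_1, …, L_N be positive real numbers such that (1/L_1, …, 1/L_N) are linearly independent over ℚ, and let F̄ : ℝ^N → ℝ be a continuous function that is L_j-periodic in its j-th argument for every j. Then the diagonal trace F(t) = F̄(t, t, …, t) has a mean value: lim_{T→∞} (1/(2T)) ∫_{−T}^{T} F(t) dt = (1/(L_1⋯L_N)) ∫_{I(L)} F̄(x_1,…,x_N) dx_1⋯dx_N, where I(L) = (0,L_1) × ⋯ × (0,L_N). -/

import Mathlib

/-!
A continuous function with periods `L j` descends, in the coordinates `x j / L j`, to a continuous
function on the unit torus (`exists_lift`), and the diagonal becomes a line with slopes `1 / L j`.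
On the torus the claim is Weyl's equidistribution argument. A character `n` restricted to this line
is `exp (2πi ω t)` with `ω = ∑ n j / L j`, and rational independence gives `ω ≠ 0` whenever
`n ≠ 0`. So its time averages are `O(1 / T)` (`tendsto_timeAvg_mFourier`), and its cell average
is zero (`cellAvg_mFourier`); for `n = 0` both averages are `1`. Trigonometric polynomials are dense
in the uniform norm, and both averages are linear and bounded by that norm, which extends the limit
to all continuous functions (`tendsto_timeAvg`).
-/

open MeasureTheory Filter Set

/-- The time average over `[-T, T]` along the diagonal line, of a function on the torus. -/
noncomputable def timeAvg {N : ℕ} (L : Fin N → ℝ) (f : C(UnitAddTorus (Fin N), ℂ)) (T : ℝ) : ℂ :=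
  ((1 / (2 * T) : ℝ) : ℂ) *
    ∫ t in (-T)..T, f (fun j => ((t / L j : ℝ) : UnitAddCircle))

/-- The average over the cell `∏ (0, L j)` of a function on the torus, in the coordinates
`x j / L j`. -/
noncomputable def cellAvg {N : ℕ} (L : Fin N → ℝ) (f : C(UnitAddTorus (Fin N), ℂ)) : ℂ :=
  (((∏ j, L j)⁻¹ : ℝ) : ℂ) *
    ∫ x in Set.univ.pi (fun j => Set.Ioo 0 (L j)), f (fun j => ((x j / L j : ℝ) : UnitAddCircle))

lemma continuous_line {N : ℕ} (L : Fin N → ℝ) (f : C(UnitAddTorus (Fin N), ℂ)) :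
    Continuous fun t : ℝ => f (fun j => ((t / L j : ℝ) : UnitAddCircle)) := by
  refine f.continuous.comp (continuous_pi fun j => ?_)
  exact (AddCircle.continuous_mk' 1).comp (by fun_prop)

lemma continuous_cell {N : ℕ} (L : Fin N → ℝ) (f : C(UnitAddTorus (Fin N), ℂ)) :
    Continuous fun x : Fin N → ℝ => f (fun j => ((x j / L j : ℝ) : UnitAddCircle)) := by
  refine f.continuous.comp (continuous_pi fun j => ?_)
  exact (AddCircle.continuous_mk' 1).comp (by fun_prop)

lemma volume_cell {N : ℕ} (L : Fin N → ℝ) (hL : ∀ j, 0 < L j) :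
    volume.real (Set.univ.pi (fun j => Set.Ioo 0 (L j))) = ∏ j, L j := by
  rw [Measure.real, Real.volume_pi_Ioo_toReal (a := fun _ => 0) (fun j => (hL j).le)]
  simp

lemma integrableOn_cell {N : ℕ} (L : Fin N → ℝ) (f : C(UnitAddTorus (Fin N), ℂ)) :
    IntegrableOn (fun x : Fin N → ℝ => f (fun j => ((x j / L j : ℝ) : UnitAddCircle)))
      (Set.univ.pi (fun j => Set.Ioo 0 (L j))) := by
  refine ((continuous_cell L f).continuousOn.integrableOn_compact
    (isCompact_univ_pi fun j => isCompact_Icc (a := 0) (b := L j))).mono_set ?_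
  exact Set.pi_mono fun j _ => Ioo_subset_Icc_self

lemma timeAvg_sub {N : ℕ} (L : Fin N → ℝ) (f g : C(UnitAddTorus (Fin N), ℂ)) (T : ℝ) :
    timeAvg L (f - g) T = timeAvg L f T - timeAvg L g T := by
  simp only [timeAvg, ContinuousMap.sub_apply]
  rw [intervalIntegral.integral_sub ((continuous_line L f).intervalIntegrable _ _)
    ((continuous_line L g).intervalIntegrable _ _), mul_sub]

lemma timeAvg_add {N : ℕ} (L : Fin N → ℝ) (f g : C(UnitAddTorus (Fin N), ℂ)) (T : ℝ) :
    timeAvg L (f + g) T = timeAvg L f T + timeAvg L g T := by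
  simp only [timeAvg, ContinuousMap.add_apply]
  rw [intervalIntegral.integral_add ((continuous_line L f).intervalIntegrable _ _)
    ((continuous_line L g).intervalIntegrable _ _), mul_add]

lemma timeAvg_smul {N : ℕ} (L : Fin N → ℝ) (a : ℂ) (f : C(UnitAddTorus (Fin N), ℂ)) (T : ℝ) :
    timeAvg L (a • f) T = a * timeAvg L f T := by
  simp only [timeAvg, ContinuousMap.smul_apply, smul_eq_mul]
  rw [intervalIntegral.integral_const_mul]
  ring

lemma cellAvg_sub {N : ℕ} (L : Fin N → ℝ) (f g : C(UnitAddTorus (Fin N), ℂ)) :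
    cellAvg L (f - g) = cellAvg L f - cellAvg L g := by
  simp only [cellAvg, ContinuousMap.sub_apply]
  rw [integral_sub (integrableOn_cell L f) (integrableOn_cell L g), mul_sub]

lemma cellAvg_add {N : ℕ} (L : Fin N → ℝ) (f g : C(UnitAddTorus (Fin N), ℂ)) :
    cellAvg L (f + g) = cellAvg L f + cellAvg L g := by
  simp only [cellAvg, ContinuousMap.add_apply]
  rw [integral_add (integrableOn_cell L f) (integrableOn_cell L g), mul_add]

lemma cellAvg_smul {N : ℕ} (L : Fin N → ℝ) (a : ℂ) (f : C(UnitAddTorus (Fin N), ℂ)) :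
    cellAvg L (a • f) = a * cellAvg L f := by
  simp only [cellAvg, ContinuousMap.smul_apply, smul_eq_mul]
  rw [integral_const_mul]
  ring

lemma norm_timeAvg_le {N : ℕ} (L : Fin N → ℝ) (f : C(UnitAddTorus (Fin N), ℂ)) {T : ℝ}
    (hT : 0 < T) : ‖timeAvg L f T‖ ≤ ‖f‖ := by
  have h : ‖∫ t in (-T)..T, f (fun j => ((t / L j : ℝ) : UnitAddCircle))‖ ≤
      ‖f‖ * |T - (-T)| :=
    intervalIntegral.norm_integral_le_of_norm_le_const fun t _ => f.norm_coe_le_norm _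
  have h2 : |T - (-T)| = 2 * T := by rw [abs_of_pos] <;> linarith
  rw [h2] at h
  rw [timeAvg, norm_mul, Complex.norm_real, Real.norm_of_nonneg (by positivity)]
  calc _ ≤ 1 / (2 * T) * (‖f‖ * (2 * T)) := by gcongr
    _ = ‖f‖ := by field_simp

lemma norm_cellAvg_le {N : ℕ} (L : Fin N → ℝ) (hL : ∀ j, 0 < L j)
    (f : C(UnitAddTorus (Fin N), ℂ)) : ‖cellAvg L f‖ ≤ ‖f‖ := by
  have hp : 0 < ∏ j, L j := Finset.prod_pos fun j _ => hL j
  have h : ‖∫ x in Set.univ.pi (fun j => Set.Ioo 0 (L j)),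
      f (fun j => ((x j / L j : ℝ) : UnitAddCircle))‖ ≤
      ‖f‖ * volume.real (Set.univ.pi (fun j => Set.Ioo 0 (L j))) := by
    refine norm_setIntegral_le_of_norm_le_const ?_ fun x _ => f.norm_coe_le_norm _
    rw [Real.volume_pi_Ioo (a := fun _ => 0)]
    exact ENNReal.prod_lt_top fun _ _ => ENNReal.ofReal_lt_top
  rw [volume_cell L hL] at h
  rw [cellAvg, norm_mul, Complex.norm_real, Real.norm_of_nonneg (by positivity)]
  calc _ ≤ (∏ j, L j)⁻¹ * (‖f‖ * ∏ j, L j) := by gcongr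
    _ = ‖f‖ := by field_simp

/-- Along the line `t ↦ (t / L j)`, the character of frequency `n` is the exponential of
frequency `∑ n j / L j`. -/
lemma mFourier_line {N : ℕ} (L : Fin N → ℝ) (n : Fin N → ℤ) (t : ℝ) :
    UnitAddTorus.mFourier n (fun j => ((t / L j : ℝ) : UnitAddCircle)) =
      Complex.exp (((2 * Real.pi * ∑ j, n j * (L j)⁻¹ : ℝ) : ℂ) * Complex.I * t) := by
  simp only [UnitAddTorus.mFourier, ContinuousMap.coe_mk, fourier_coe_apply]
  rw [← Complex.exp_sum]
  congr 1
  push_cast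
  simp only [Finset.mul_sum, Finset.sum_mul]
  refine Finset.sum_congr rfl fun j _ => ?_
  simp only [div_eq_mul_inv, inv_one, mul_one]
  ring

lemma freq_ne_zero {N : ℕ} (L : Fin N → ℝ)
    (hindep : LinearIndependent ℚ (fun j : Fin N => (L j)⁻¹)) {n : Fin N → ℤ} (hn : n ≠ 0) :
    ∑ j, n j * (L j)⁻¹ ≠ 0 := by
  intro h
  apply hn
  funext j
  have := Fintype.linearIndependent_iff.1 hindep (fun j => (n j : ℚ))
    (by simpa [Rat.smul_def] using h) j
  exact_mod_cast this

/-- The time averages of a nontrivial character decay, being `O(1 / T)`. -/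
lemma tendsto_timeAvg_mFourier {N : ℕ} (L : Fin N → ℝ)
    (hindep : LinearIndependent ℚ (fun j : Fin N => (L j)⁻¹)) {n : Fin N → ℤ} (hn : n ≠ 0) :
    Tendsto (timeAvg L (UnitAddTorus.mFourier n)) atTop (nhds 0) := by
  set w : ℝ := 2 * Real.pi * ∑ j, n j * (L j)⁻¹ with hw
  have hw0 : w ≠ 0 := mul_ne_zero Real.two_pi_pos.ne' (freq_ne_zero L hindep hn)
  have hc : (w : ℂ) * Complex.I ≠ 0 :=
    mul_ne_zero (Complex.ofReal_ne_zero.2 hw0) Complex.I_ne_zero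
  have hexp : ∀ t : ℝ, ‖Complex.exp ((w : ℂ) * Complex.I * t)‖ = 1 := fun t => by
    rw [mul_right_comm, ← Complex.ofReal_mul, Complex.norm_exp_ofReal_mul_I]
  have hlim : Tendsto (fun T : ℝ => 1 / (2 * T) * (2 / |w|)) atTop (nhds 0) := by
    have : Tendsto (fun T : ℝ => T⁻¹ * (1 / 2 * (2 / |w|))) atTop (nhds 0) := by
      simpa using tendsto_inv_atTop_zero.mul_const (1 / 2 * (2 / |w|))
    refine this.congr fun T => ?_
    rw [one_div (2 * T), mul_inv]
    ring
  refine squeeze_zero_norm' ?_ hlim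
  filter_upwards [eventually_gt_atTop 0] with T hT
  simp only [timeAvg, mFourier_line, ← hw]
  rw [integral_exp_mul_complex hc, norm_mul, norm_div, Complex.norm_real,
    Real.norm_of_nonneg (by positivity), norm_mul, Complex.norm_I, mul_one, Complex.norm_real,
    Real.norm_eq_abs]
  gcongr
  refine (norm_sub_le _ _).trans ?_
  rw [hexp, hexp]
  norm_num

/-- A nontrivial character has cell average zero: the integral factors over the coordinates, and
a coordinate with `n i ≠ 0` contributes a full-period integral of an exponential. -/
lemma cellAvg_mFourier {N : ℕ} (L : Fin N → ℝ) (hL : ∀ j, 0 < L j) {n : Fin N → ℤ}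
    (hn : n ≠ 0) : cellAvg L (UnitAddTorus.mFourier n) = 0 := by
  obtain ⟨i, hi⟩ := Function.ne_iff.1 hn
  rw [cellAvg, volume_pi, Measure.restrict_pi_pi]
  simp only [UnitAddTorus.mFourier, ContinuousMap.coe_mk]
  rw [integral_fintype_prod_eq_prod
    (f := fun j (x : ℝ) => fourier (n j) ((x / L j : ℝ) : UnitAddCircle))]
  refine mul_eq_zero_of_right _ (Finset.prod_eq_zero (Finset.mem_univ i) ?_)
  rw [← integral_Ioc_eq_integral_Ioo, ← intervalIntegral.integral_of_le (hL i).le]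
  have hLi : (L i : ℂ) ≠ 0 := Complex.ofReal_ne_zero.2 (hL i).ne'
  have hc : 2 * Real.pi * Complex.I * n i / L i ≠ 0 :=
    div_ne_zero (mul_ne_zero Complex.two_pi_I_ne_zero (Int.cast_ne_zero.2 hi)) hLi
  have : ∀ x : ℝ, fourier (n i) ((x / L i : ℝ) : UnitAddCircle) =
      Complex.exp (2 * Real.pi * Complex.I * n i / L i * x) := fun x => by
    rw [fourier_coe_apply]
    congr 1
    push_cast
    ring
  simp only [this]
  rw [integral_exp_mul_complex hc, div_mul_cancel₀ _ hLi, mul_comm _ (n i : ℂ),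
    Complex.exp_int_mul_two_pi_mul_I]
  simp

lemma tendsto_avg_mFourier {N : ℕ} (L : Fin N → ℝ) (hL : ∀ j, 0 < L j)
    (hindep : LinearIndependent ℚ (fun j : Fin N => (L j)⁻¹)) (n : Fin N → ℤ) :
    Tendsto (timeAvg L (UnitAddTorus.mFourier n)) atTop
      (nhds (cellAvg L (UnitAddTorus.mFourier n))) := by
  by_cases hn : n = 0
  · subst hn
    have hp : ((∏ j, L j : ℝ) : ℂ) ≠ 0 :=
      Complex.ofReal_ne_zero.2 (Finset.prod_pos fun j _ => hL j).ne'
    have hcell : cellAvg L (UnitAddTorus.mFourier 0) = 1 := by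
      simp only [cellAvg, UnitAddTorus.mFourier_zero, ContinuousMap.one_apply]
      rw [setIntegral_const, volume_cell L hL, Complex.real_smul, mul_one, Complex.ofReal_inv,
        inv_mul_cancel₀ hp]
    rw [hcell]
    refine tendsto_const_nhds.congr' ?_
    filter_upwards [eventually_gt_atTop 0] with T hT
    simp only [timeAvg, UnitAddTorus.mFourier_zero, ContinuousMap.one_apply]
    rw [intervalIntegral.integral_const, Complex.real_smul, mul_one, ← Complex.ofReal_mul]
    have : 1 / (2 * T) * (T - -T) = 1 := by field_simp; ring
    rw [this, Complex.ofReal_one]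
  · rw [cellAvg_mFourier L hL hn]
    exact tendsto_timeAvg_mFourier L hindep hn

/-- Mean value theorem on the torus: the set of `f` satisfying it is a linear subspace that contains
the characters and is closed in the uniform norm, since both averages are contractions. -/
lemma tendsto_timeAvg {N : ℕ} (L : Fin N → ℝ) (hL : ∀ j, 0 < L j)
    (hindep : LinearIndependent ℚ (fun j : Fin N => (L j)⁻¹))
    (f : C(UnitAddTorus (Fin N), ℂ)) :
    Tendsto (timeAvg L f) atTop (nhds (cellAvg L f)) := by
  have hspan : ∀ g ∈ Submodule.span ℂ (range (UnitAddTorus.mFourier (d := Fin N))),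
      Tendsto (timeAvg L g) atTop (nhds (cellAvg L g)) := by
    intro g hg
    induction hg using Submodule.span_induction with
    | mem g hg =>
      obtain ⟨n, rfl⟩ := hg
      exact tendsto_avg_mFourier L hL hindep n
    | zero =>
      have h1 : timeAvg L 0 = fun _ => 0 := funext fun T => by simp [timeAvg]
      have h2 : cellAvg L 0 = 0 := by simp [cellAvg]
      rw [h1, h2]
      exact tendsto_const_nhds
    | add g h _ _ ihg ihh =>
      rw [cellAvg_add]
      exact (ihg.add ihh).congr fun T => (timeAvg_add L g h T).symm
    | smul a g _ ihg =>
      rw [cellAvg_smul]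
      exact (ihg.const_mul a).congr fun T => (timeAvg_smul L a g T).symm
  have hf : f ∈ closure (Submodule.span ℂ (range (UnitAddTorus.mFourier (d := Fin N))) :
      Set C(UnitAddTorus (Fin N), ℂ)) := by
    rw [← Submodule.topologicalClosure_coe, UnitAddTorus.span_mFourier_closure_eq_top]
    trivial
  rw [Metric.tendsto_nhds]
  intro ε hε
  obtain ⟨g, hg, hfg⟩ := Metric.mem_closure_iff.1 hf (ε / 3) (by positivity)
  rw [dist_eq_norm] at hfg
  filter_upwards [Metric.tendsto_nhds.1 (hspan g hg) (ε / 3) (by positivity),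
    eventually_gt_atTop 0] with T hgT hT
  have h1 := norm_timeAvg_le L (f - g) hT
  have h2 := norm_cellAvg_le L hL (f - g)
  rw [timeAvg_sub, ← dist_eq_norm] at h1
  rw [cellAvg_sub, ← dist_eq_norm, dist_comm] at h2
  have h3 := dist_triangle4 (timeAvg L f T) (timeAvg L g T) (cellAvg L g) (cellAvg L f)
  linarith

lemma periodic_lattice {N : ℕ} (L : Fin N → ℝ) (F : (Fin N → ℝ) → ℝ)
    (hFper : ∀ (x : Fin N → ℝ) (j : Fin N), F (Function.update x j (x j + L j)) = F x)
    (n : Fin N → ℤ) (x : Fin N → ℝ) : F (fun j => x j + n j * L j) = F x := by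
  have hper : ∀ j, Function.Periodic F (Pi.single j (L j)) := fun j x => by
    rw [← hFper x j]
    congr 1
    funext k
    rcases eq_or_ne k j with rfl | hk <;> simp [*]
  have hs : ∀ s : Finset (Fin N),
      Function.Periodic F (∑ j ∈ s, n j • (Pi.single j (L j) : Fin N → ℝ)) := fun s => by
    induction s using Finset.induction_on with
    | empty => intro x; simp
    | insert j s hj ih =>
      rw [Finset.sum_insert hj]
      exact ((hper j).zsmul (n j)).add_period ih
  rw [← hs Finset.univ x]
  congr 1
  funext k
  simp [Finset.sum_apply, Pi.single_apply]

/-- A continuous `L j`-periodic function descends to the unit torus in the coordinates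
`x j / L j`. -/
lemma exists_lift {N : ℕ} (L : Fin N → ℝ) (hL : ∀ j, 0 < L j)
    (F : (Fin N → ℝ) → ℝ) (hFcont : Continuous F)
    (hFper : ∀ (x : Fin N → ℝ) (j : Fin N), F (Function.update x j (x j + L j)) = F x) :
    ∃ f : C(UnitAddTorus (Fin N), ℂ), ∀ x : Fin N → ℝ,
      f (fun j => ((x j / L j : ℝ) : UnitAddCircle)) = F x := by
  let π : C(Fin N → ℝ, UnitAddTorus (Fin N)) :=
    ⟨Pi.map fun (_ : Fin N) (y : ℝ) => (y : UnitAddCircle),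
      Continuous.piMap fun _ => AddCircle.continuous_mk' 1⟩
  have hq : IsOpenQuotientMap π :=
    IsOpenQuotientMap.piMap fun _ => QuotientAddGroup.isOpenQuotientMap_mk
  let G : C(Fin N → ℝ, ℂ) := ⟨fun y => (F fun j => y j * L j : ℝ), by fun_prop⟩
  have hG : Function.FactorsThrough G π := by
    intro a b hab
    have : ∀ j, ∃ m : ℤ, b j = a j + m := fun j => by
      have hj : ((b j : ℝ) : UnitAddCircle) = (a j : ℝ) := (congrFun hab j).symm
      rw [← sub_eq_zero, ← AddCircle.coe_sub, AddCircle.coe_eq_zero_iff] at hj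
      obtain ⟨m, hm⟩ := hj
      rw [zsmul_one] at hm
      exact ⟨m, by rw [hm]; ring⟩
    choose m hm using this
    have := periodic_lattice L F hFper m (fun j => a j * L j)
    simp only [G, ContinuousMap.coe_mk]
    rw [← this]
    simp only [hm, add_mul]
  refine ⟨hq.isQuotientMap.lift G hG, fun x => ?_⟩
  have := DFunLike.congr_fun (hq.isQuotientMap.lift_comp G hG) (fun j => x j / L j)
  refine Eq.trans this ?_
  simp only [G, ContinuousMap.coe_mk]
  congr 2
  funext j
  exact div_mul_cancel₀ _ (hL j).ne'

/-- The diagonal trace of a continuous multi-periodic function with rationally independent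
frequencies has a mean value equal to the cell average. -/
theorem diagonal_trace_mean_value
    (N : ℕ) (hN : 1 ≤ N)
    (L : Fin N → ℝ) (hL : ∀ j, 0 < L j)
    (hindep : LinearIndependent ℚ (fun j : Fin N => (L j)⁻¹))
    (F : (Fin N → ℝ) → ℝ) (hFcont : Continuous F)
    (hFper : ∀ (x : Fin N → ℝ) (j : Fin N),
      F (Function.update x j (x j + L j)) = F x) :
    Tendsto (fun T : ℝ => (1 / (2 * T)) * ∫ t in (-T)..T, F (fun _ => t))
      atTop
      (nhds ((∏ j, L j)⁻¹ *
        ∫ x in Set.univ.pi (fun j => Set.Ioo 0 (L j)), F x)) := by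
  obtain ⟨f, hf⟩ := exists_lift L hL F hFcont hFper
  have hcell : cellAvg L f = (((∏ j, L j)⁻¹ *
      ∫ x in Set.univ.pi (fun j => Set.Ioo 0 (L j)), F x : ℝ) : ℂ) := by
    simp only [cellAvg, hf]
    rw [integral_complex_ofReal, Complex.ofReal_mul]
  have htime : ∀ T, timeAvg L f T =
      ((1 / (2 * T) * ∫ t in (-T)..T, F (fun _ => t) : ℝ) : ℂ) := fun T => by
    have : ∀ t : ℝ, f (fun j => ((t / L j : ℝ) : UnitAddCircle)) = F (fun _ => t) :=
      fun t => hf fun _ => t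
    simp only [timeAvg, this]
    rw [intervalIntegral.integral_ofReal, Complex.ofReal_mul]
  have h := tendsto_timeAvg L hL hindep f
  rw [hcell] at h
  have h' := (Complex.continuous_re.tendsto _).comp h
  rw [Complex.ofReal_re] at h'
  refine h'.congr fun T => ?_
  rw [Function.comp_apply, htime, Complex.ofReal_re]
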